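/- Let C be a normal, closed cone with nonempty interior in a real Banach space. Let f : int C → int C be nonexpansive with respect to Thompson's metric d_T and either γ-condensing or τ-condensing. If f has a fixed point in int C, then for every 0 < α < 1 and every x₀ ∈ int C, the sequence defined by x_{n+1} = α f(x_n) + (1−α) x_n converges (in norm, equivalently in d_T) to a fixed point of f. -/

import Mathlib

/-!
Write `g v = α • f v + (1 - α) • v`. For `β ≥ 1`, `d_T(x, y) ≤ log β` means `x ≤ β y` and
`y ≤ β x` (`Comp C β x y`), a relation that `f` preserves and that convex combinations respect.
Hence `g` is nonexpansive and distances from the orbit `x n` to fixed points do not increase; in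
particular the orbit is `d_T`-bounded, and norm-bounded by normality.

*Asymptotic regularity* (`asymptotic_regularity`). Suppose the step ratios `exp d_T(x n, x (n+1))`
decrease to `b > 1`. At a late index some nonnegative functional `φ` has
`φ (x (n+1)) ≈ b φ (x n)` (or the reverse). Since neither `φ ∘ x` nor `φ ∘ f ∘ x` can change by a
factor much larger than `b` in one step, the averaging relation forces the ratio to be nearly `b`
one step earlier as well, and so on backwards (`growth`, `decay`). Over `N` steps this
yields a ratio close to `b ^ N`, which contradicts boundedness. No compactness is used here.

*Compactness*. The orbit `A` satisfies `A = {x 0} ∪ g(A)`. If `A` had positive noncompactness, the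
condensing hypothesis would make `f(A)`, and then `g(A)`, strictly less noncompact than `A`: for the
norm because diameters average, for `d_T` because the ratio of an average is strictly below the
larger of the two ratios, uniformly on a `d_T`-bounded set. So `A` is totally bounded in norm.

A cluster point `q` of the orbit lies in the interior, and is fixed because `f` is continuous and
`x n - f (x n) → 0`. Near `q` the norm controls `d_T`, and `d_T(x n, q)` is nonincreasing, so the
whole sequence converges to `q`.
-/

open Filter Topology Bornology

section ConeDefs

variable {X : Type*} [NormedAddCommGroup X] [NormedSpace ℝ X]

/-- `C` is a closed cone: a closed convex set with `l • C ⊆ C` for `l ≥ 0` and `C ∩ (-C) = {0}`. -/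
def IsClosedCone (C : Set X) : Prop :=
  IsClosed C ∧ Convex ℝ C ∧ (∀ l : ℝ, 0 ≤ l → ∀ x ∈ C, l • x ∈ C) ∧ C ∩ (-C) = {0}

/-- `C` is a normal cone: `0 ≤ x ≤ y` implies `‖x‖ ≤ κ * ‖y‖`. -/
def IsNormalCone (C : Set X) : Prop :=
  ∃ κ : ℝ, ∀ x y : X, x ∈ C → y - x ∈ C → ‖x‖ ≤ κ * ‖y‖

/-- `C` is a regular cone: every decreasing sequence in `C` converges in norm. -/
def IsRegularCone (C : Set X) : Prop :=
  ∀ x : ℕ → X, (∀ n, x n ∈ C) → (∀ n, x n - x (n + 1) ∈ C) →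
    ∃ l : X, Tendsto x atTop (𝓝 l)

/-- Thompson's metric: `d_T(x,y) = log inf {β ≥ 1 : β⁻¹ • x ≤ y ∧ y ≤ β • x}`,
where `≤` is the order induced by the cone `C`. -/
noncomputable def thompsonDist (C : Set X) (x y : X) : ℝ :=
  Real.log (sInf {β : ℝ | 1 ≤ β ∧ y - β⁻¹ • x ∈ C ∧ β • x - y ∈ C})

/-- `A` is bounded in Thompson's metric. -/
def TBounded (C A : Set X) : Prop :=
  ∃ d : ℝ, ∀ x ∈ A, ∀ y ∈ A, thompsonDist C x y ≤ d

/-- Kuratowski's measure of noncompactness for the norm: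
the infimum of all `d > 0` such that `A` admits a finite cover by sets of diameter at most `d`. -/
noncomputable def kuratowski (A : Set X) : ℝ :=
  sInf {d : ℝ | 0 < d ∧ ∃ (n : ℕ) (S : Fin n → Set X), A ⊆ ⋃ i, S i ∧
    ∀ i, IsBounded (S i) ∧ Metric.diam (S i) ≤ d}

/-- Kuratowski's measure of noncompactness for Thompson's metric: the infimum of all `d > 0`
such that `A` admits a finite cover by subsets of `interior C` of `d_T`-diameter at most `d`. -/
noncomputable def tauMNC (C A : Set X) : ℝ :=
  sInf {d : ℝ | 0 < d ∧ ∃ (n : ℕ) (S : Fin n → Set X), A ⊆ ⋃ i, S i ∧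
    ∀ i, S i ⊆ interior C ∧ ∀ x ∈ S i, ∀ y ∈ S i, thompsonDist C x y ≤ d}

/-- `f` is continuous and `γ`-condensing on `D`. -/
def GammaCondensing {X : Type*} [NormedAddCommGroup X] [NormedSpace ℝ X]
    (f : X → X) (D : Set X) : Prop :=
  ContinuousOn f D ∧ ∀ A ⊆ D, IsBounded A → 0 < kuratowski A →
    kuratowski (f '' A) < kuratowski A

/-- `f` is continuous and `τ`-condensing on `D`. -/
def TauCondensing (C : Set X) (f : X → X) (D : Set X) : Prop :=
  ContinuousOn f D ∧ ∀ A ⊆ D, TBounded C A → 0 < tauMNC C A →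
    tauMNC C (f '' A) < tauMNC C A

/-- `f` is nonexpansive with respect to Thompson's metric on `D`. -/
def TNonexpansiveOn (C : Set X) (f : X → X) (D : Set X) : Prop :=
  ∀ x ∈ D, ∀ y ∈ D, thompsonDist C (f x) (f y) ≤ thompsonDist C x y

/-- `f` is order-preserving on `D` for the order induced by `C`. -/
def OrderPreservingOn (C : Set X) (f : X → X) (D : Set X) : Prop :=
  ∀ x ∈ D, ∀ y ∈ D, y - x ∈ C → f y - f x ∈ C

/-- `f` is subhomogeneous on `D`: `f (t • x) ≤ t • f x` for `t ≥ 1`. -/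
def SubhomogeneousOn (C : Set X) (f : X → X) (D : Set X) : Prop :=
  ∀ t : ℝ, 1 ≤ t → ∀ x ∈ D, t • f x - f (t • x) ∈ C

/-- `M(x/y) = inf {β > 0 : x ≤ β • y}`, valued in `ℝ≥0∞` (`⊤` if no such `β` exists). -/
noncomputable def Mratio (C : Set X) (x y : X) : ENNReal :=
  sInf {b : ENNReal | ∃ β : ℝ, 0 < β ∧ b = ENNReal.ofReal β ∧ β • y - x ∈ C}

/-- `m(x/y) = sup {α > 0 : α • y ≤ x}`, valued in `ℝ≥0∞`. -/
noncomputable def mratio (C : Set X) (x y : X) : ENNReal :=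
  sSup {b : ENNReal | ∃ α : ℝ, 0 < α ∧ b = ENNReal.ofReal α ∧ x - α • y ∈ C}

/-- The upper Collatz–Wielandt number `r(f) = inf_{x ∈ int C} M(f(x)/x)`. -/
noncomputable def upperCW (C : Set X) (f : X → X) : ENNReal :=
  ⨅ x ∈ interior C, Mratio C (f x) x

/-- The lower Collatz–Wielandt number `λ(f) = sup_{x ∈ int C} m(f(x)/x)`. -/
noncomputable def lowerCW (C : Set X) (f : X → X) : ENNReal :=
  ⨆ x ∈ interior C, mratio C (f x) x

/-- The order-unit norm `‖x‖_u = inf {k > 0 : -k • u ≤ x ≤ k • u}`. -/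
noncomputable def orderUnitNorm (C : Set X) (u x : X) : ℝ :=
  sInf {k : ℝ | 0 < k ∧ x + k • u ∈ C ∧ k • u - x ∈ C}

end ConeDefs

section Krasnoselskii

open Set

/-! ### Cone calculus -/

variable {X : Type*} [NormedAddCommGroup X] [NormedSpace ℝ X] {C : Set X}

/-- `x` and `y` are `β`-comparable: `y ≤ β x` and `x ≤ β y`. For `β ≥ 1` and interior points this
says `d_T(x, y) ≤ log β`. -/
def Comp (C : Set X) (β : ℝ) (x y : X) : Prop := β • x - y ∈ C ∧ β • y - x ∈ C

lemma cone_smul (hC : IsClosedCone C) {l : ℝ} (hl : 0 ≤ l) {x : X} (hx : x ∈ C) : l • x ∈ C :=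
  hC.2.2.1 l hl x hx

lemma cone_add (hC : IsClosedCone C) {x y : X} (hx : x ∈ C) (hy : y ∈ C) : x + y ∈ C := by
  have h : (1 / 2 : ℝ) • x + (1 / 2 : ℝ) • y ∈ C :=
    hC.2.1 hx hy (by norm_num) (by norm_num) (by norm_num)
  have h2 := cone_smul hC (l := 2) (by norm_num) h
  have e : (2 : ℝ) • ((1 / 2 : ℝ) • x + (1 / 2 : ℝ) • y) = x + y := by module
  rwa [e] at h2

lemma cone_zero (hC : IsClosedCone C) : (0 : X) ∈ C := by
  have : (0 : X) ∈ C ∩ (-C) := by rw [hC.2.2.2]; rfl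
  exact this.1

/-- An interior point `u` is an order unit: vectors of norm below `ε r` lie between `-ε u`
and `ε u`. -/
lemma exists_radius (hC : IsClosedCone C) {u : X} (hu : u ∈ interior C) :
    ∃ r > 0, ∀ ε > 0, ∀ z : X, ‖z‖ < ε * r → ε • u + z ∈ C := by
  obtain ⟨r, hr, hb⟩ := Metric.isOpen_iff.1 isOpen_interior u hu
  refine ⟨r, hr, fun ε hε z hz => ?_⟩
  have h1 : u + ε⁻¹ • z ∈ C := by
    apply interior_subset
    apply hb
    rw [Metric.mem_ball, dist_eq_norm, add_sub_cancel_left, norm_smul, norm_inv,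
      Real.norm_of_nonneg hε.le, inv_mul_lt_iff₀ hε]
    exact hz
  have h2 := cone_smul hC hε.le h1
  rwa [smul_add, smul_inv_smul₀ hε.ne'] at h2

lemma mem_interior_of_ge (hC : IsClosedCone C) {u v : X} (hu : u ∈ interior C) {c : ℝ}
    (hc : 0 < c) (h : v - c • u ∈ C) : v ∈ interior C := by
  obtain ⟨r, hr, hb⟩ := exists_radius hC hu
  rw [mem_interior_iff_mem_nhds]
  refine Filter.mem_of_superset (Metric.ball_mem_nhds v (mul_pos hc hr)) fun z hz => ?_
  rw [Metric.mem_ball, dist_eq_norm] at hz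
  have h1 := cone_add hC (hb c hc _ hz) h
  have e : c • u + (z - v) + (v - c • u) = z := by abel
  rwa [e] at h1

lemma Comp.symm {β : ℝ} {x y : X} (h : Comp C β x y) : Comp C β y x := ⟨h.2, h.1⟩

lemma Comp.mono (hC : IsClosedCone C) {β β' : ℝ} (hb : β ≤ β') {x y : X} (hx : x ∈ C)
    (hy : y ∈ C) (h : Comp C β x y) : Comp C β' x y := by
  constructor
  · have e : β' • x - y = (β • x - y) + (β' - β) • x := by module
    rw [e]
    exact cone_add hC h.1 (cone_smul hC (by linarith) hx)
  · have e : β' • y - x = (β • y - x) + (β' - β) • y := by module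
    rw [e]
    exact cone_add hC h.2 (cone_smul hC (by linarith) hy)

lemma Comp.trans (hC : IsClosedCone C) {a b : ℝ} (ha : 0 ≤ a) (hb : 0 ≤ b) {x y z : X}
    (h : Comp C a x y) (h' : Comp C b y z) : Comp C (a * b) x z := by
  constructor
  · have e : (a * b) • x - z = b • (a • x - y) + (b • y - z) := by module
    rw [e]
    exact cone_add hC (cone_smul hC hb h.1) h'.1
  · have e : (a * b) • z - x = a • (b • z - y) + (a • y - x) := by module
    rw [e]
    exact cone_add hC (cone_smul hC ha h'.2) h.2

lemma Comp.average (hC : IsClosedCone C) {α β : ℝ} (h0 : 0 ≤ α) (h1 : α ≤ 1) {x y u v : X}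
    (h : Comp C β u v) (h' : Comp C β x y) :
    Comp C β (α • u + (1 - α) • x) (α • v + (1 - α) • y) := by
  constructor
  · have e : β • (α • u + (1 - α) • x) - (α • v + (1 - α) • y)
        = α • (β • u - v) + (1 - α) • (β • x - y) := by module
    rw [e]
    exact cone_add hC (cone_smul hC h0 h.1) (cone_smul hC (by linarith) h'.1)
  · have e : β • (α • v + (1 - α) • y) - (α • u + (1 - α) • x)
        = α • (β • v - u) + (1 - α) • (β • y - x) := by module
    rw [e]
    exact cone_add hC (cone_smul hC h0 h.2) (cone_smul hC (by linarith) h'.2)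

/-- Norm-close points are comparable with constant close to `1`, near an interior point. -/
lemma exists_delta_comp (hC : IsClosedCone C) {u : X} (hu : u ∈ interior C) {ε : ℝ}
    (hε : 0 < ε) {c : ℝ} (hc : 0 < c) :
    ∃ δ > 0, ∀ x y : X, x - c • u ∈ C → y - c • u ∈ C → ‖x - y‖ < δ → Comp C (1 + ε) x y := by
  obtain ⟨r, hr, hb⟩ := exists_radius hC hu
  have key : ∀ x y : X, x - c • u ∈ C → ‖x - y‖ < ε * c * r → (1 + ε) • x - y ∈ C := by
    intro x y hx hxy
    have h1 := cone_add hC (cone_smul hC hε.le hx) (hb (ε * c) (by positivity) (x - y) hxy)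
    have e : ε • (x - c • u) + ((ε * c) • u + (x - y)) = (1 + ε) • x - y := by module
    rwa [e] at h1
  refine ⟨ε * c * r, by positivity, fun x y hx hy hxy => ⟨key x y hx hxy, key y x hy ?_⟩⟩
  rwa [norm_sub_rev]

lemma exists_comp (hC : IsClosedCone C) {x y : X} (hx : x ∈ interior C) (hy : y ∈ interior C) :
    ∃ β : ℝ, 1 ≤ β ∧ Comp C β x y := by
  have key : ∀ x y : X, x ∈ interior C → ∃ β : ℝ, 1 ≤ β ∧ β • x - y ∈ C := by
    intro x y hx
    obtain ⟨r, hr, hb⟩ := exists_radius hC hx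
    refine ⟨‖y‖ / r + 1, by have : 0 ≤ ‖y‖ / r := by positivity
                            linarith, ?_⟩
    rw [sub_eq_add_neg]
    apply hb _ (by positivity)
    rw [norm_neg, add_mul, div_mul_cancel₀ _ hr.ne']
    linarith
  obtain ⟨a, ha, h1⟩ := key x y hx
  obtain ⟨b, hb, h2⟩ := key y x hy
  refine ⟨max a b, le_max_of_le_left ha, ?_, ?_⟩
  · have e : max a b • x - y = (a • x - y) + (max a b - a) • x := by module
    rw [e]
    exact cone_add hC h1 (cone_smul hC (sub_nonneg.2 (le_max_left _ _)) (interior_subset hx))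
  · have e : max a b • y - x = (b • y - x) + (max a b - b) • y := by module
    rw [e]
    exact cone_add hC h2 (cone_smul hC (sub_nonneg.2 (le_max_right _ _)) (interior_subset hy))

/-- Since `C` is closed, the infimum in the definition of `d_T` is attained. -/
lemma thompsonDist_le_log_iff (hC : IsClosedCone C) {x y : X} (hx : x ∈ interior C)
    (hy : y ∈ interior C) {β : ℝ} (hβ : 1 ≤ β) :
    thompsonDist C x y ≤ Real.log β ↔ Comp C β x y := by
  have hset : {β : ℝ | 1 ≤ β ∧ y - β⁻¹ • x ∈ C ∧ β • x - y ∈ C} =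
      {β : ℝ | 1 ≤ β ∧ Comp C β x y} := by
    ext β
    simp only [mem_ofPred_eq, Comp]
    refine and_congr_right fun h1 => ?_
    have hpos : 0 < β := by linarith
    rw [and_comm]
    refine and_congr_right fun _ => ⟨fun h => ?_, fun h => ?_⟩
    · have := cone_smul hC hpos.le h
      rwa [smul_sub, smul_inv_smul₀ hpos.ne'] at this
    · have := cone_smul hC (inv_pos.2 hpos).le h
      rwa [smul_sub, inv_smul_smul₀ hpos.ne'] at this
  have hcl : IsClosed {β : ℝ | 1 ≤ β ∧ Comp C β x y} := by
    refine isClosed_Ici.inter (IsClosed.inter ?_ ?_)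
    · exact hC.1.preimage (f := fun β : ℝ => β • x - y) (by fun_prop)
    · exact hC.1.preimage (f := fun β : ℝ => β • y - x) (by fun_prop)
  have hbdd : BddBelow {β : ℝ | 1 ≤ β ∧ Comp C β x y} := ⟨1, fun _ h => h.1⟩
  have hmem := hcl.csInf_mem (exists_comp hC hx hy) hbdd
  unfold thompsonDist
  rw [hset, Real.log_le_log_iff (by linarith [hmem.1]) (by linarith)]
  exact ⟨fun h => hmem.2.mono hC h (interior_subset hx) (interior_subset hy),
    fun h => csInf_le hbdd ⟨hβ, h⟩⟩

/-- Normality: comparability with constant close to `1` forces norm-closeness. -/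
lemma Comp.norm_le {κ : ℝ}
    (hκ : ∀ x y : X, x ∈ C → y - x ∈ C → ‖x‖ ≤ κ * ‖y‖) {β L : ℝ} (hβ : 1 ≤ β) {x y : X}
    (hx : ‖x‖ ≤ L) (hy : ‖y‖ ≤ L) (h : Comp C β x y) :
    ‖x - y‖ ≤ (β - 1) * (|κ| * (2 * L) + L) := by
  have h1 : ‖β • y - x‖ ≤ κ * ‖(β - 1) • (x + y)‖ := by
    apply hκ _ _ h.2
    have e : (β - 1) • (x + y) - (β • y - x) = β • x - y := by module
    rw [e]
    exact h.1
  have h0 : 0 ≤ β - 1 := by linarith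
  rw [norm_smul, Real.norm_of_nonneg h0] at h1
  have h2 : ‖x + y‖ ≤ 2 * L := (norm_add_le _ _).trans (by linarith)
  have h3 : κ * ((β - 1) * ‖x + y‖) ≤ |κ| * ((β - 1) * (2 * L)) :=
    mul_le_mul (le_abs_self κ) (by gcongr) (by positivity) (abs_nonneg κ)
  have h4 : ‖x - y‖ ≤ ‖β • y - x‖ + ‖(β - 1) • y‖ := by
    have e : x - y = (β - 1) • y - (β • y - x) := by module
    rw [e, add_comm]
    exact norm_sub_le _ _
  rw [norm_smul, Real.norm_of_nonneg h0] at h4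
  have h5 : (β - 1) * ‖y‖ ≤ (β - 1) * L := by gcongr
  nlinarith

lemma exists_functional (hC : IsClosedCone C) {v : X} (hv : v ∉ C) :
    ∃ φ : X →L[ℝ] ℝ, (∀ c ∈ C, 0 ≤ φ c) ∧ φ v < 0 := by
  obtain ⟨φ, u, h1, h2⟩ := geometric_hahn_banach_point_closed hC.2.1 hC.1 hv
  have hu : u < 0 := by simpa using h2 0 (cone_zero hC)
  refine ⟨φ, fun c hc => ?_, h1.trans hu⟩
  by_contra! hneg
  have := h2 _ (cone_smul hC (div_nonneg_of_nonpos hu.le hneg.le) hc)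
  rw [map_smul, smul_eq_mul, div_mul_cancel₀ _ hneg.ne] at this
  exact lt_irrefl _ this

/-! ### Asymptotic regularity -/

/-- If the averaged sequence `s` grows at the last step by nearly the factor `b`, while all steps
of `s` and `t` change by at most a factor slightly above `b`, then it has grown by nearly `b` at
each of the `N + 1` steps. -/
lemma growth {α b : ℝ} (h0 : 0 < α) (h1 : α < 1) (hb : 1 < b) (N : ℕ) :
    ∀ η > 0, η < b → ∃ δ > 0, ∀ (s t : ℕ → ℝ) (B : ℝ), b ≤ B → B ≤ b + δ →
      (∀ k, 0 ≤ s k) → (∀ k, s (k + 1) = α * t k + (1 - α) * s k) →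
      (∀ k, s (k + 1) ≤ B * s k) → (∀ k, t (k + 1) ≤ B * t k) →
      (b - δ) * s N ≤ s (N + 1) → (b - η) ^ (N + 1) * s 0 ≤ s (N + 1) := by
  induction N with
  | zero =>
    intro η hη hηb
    refine ⟨η, hη, fun s t B _ _ _ _ _ _ h => by simpa using h⟩
  | succ N ih =>
    intro η hη hηb
    obtain ⟨δ', hδ', H⟩ := ih η hη hηb
    have h1' : 0 < 1 - α := by linarith
    refine ⟨min (min δ' η) (δ' * (1 - α) / (2 * b)), by positivity, ?_⟩
    set δ := min (min δ' η) (δ' * (1 - α) / (2 * b)) with hδ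
    have d1 : δ ≤ δ' := (min_le_left _ _).trans (min_le_left _ _)
    have d2 : δ ≤ η := (min_le_left _ _).trans (min_le_right _ _)
    have d3 : 2 * b * δ ≤ δ' * (1 - α) := by
      have := min_le_right (min δ' η) (δ' * (1 - α) / (2 * b))
      rw [← hδ, le_div_iff₀ (by positivity)] at this
      linarith
    intro s t B hB1 hB2 hs hrec hsB htB hlast
    have step : (b - δ') * s N ≤ s (N + 1) := by
      have a1 := hrec N
      have a2 := hrec (N + 1)
      have a3 := htB N
      have a5 := hs N
      have a6 := hs (N + 1)
      have a7 : (1 - α) * b * s N ≤ (2 * δ + (1 - α)) * s (N + 1) := by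
        have : α * t (N + 1) ≤ α * (B * t N) := by gcongr
        have e1 : B * s (N + 1) ≤ (b + δ) * s (N + 1) := by gcongr
        have e2 : (1 - α) * b * s N ≤ (1 - α) * B * s N := by gcongr
        have e3 : B * s (N + 1) = B * (α * t N) + (1 - α) * B * s N := by rw [a1]; ring
        nlinarith
      have a8 : (2 * δ + (1 - α)) * b * s (N + 1) ≤ (1 - α) * (b + δ') * s (N + 1) :=
        mul_le_mul_of_nonneg_right (by nlinarith) a6
      have a9 : (1 - α) * b * (b * s N) ≤ (1 - α) * ((b + δ') * s (N + 1)) := by nlinarith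
      have a10 : b * (b * s N) ≤ (b + δ') * s (N + 1) := by
        have : (1 - α) * (b * (b * s N)) ≤ (1 - α) * ((b + δ') * s (N + 1)) := by linarith
        exact le_of_mul_le_mul_left this h1'
      have a11 : (b + δ') * ((b - δ') * s N) ≤ (b + δ') * s (N + 1) := by nlinarith [sq_nonneg δ']
      exact le_of_mul_le_mul_left a11 (by linarith)
    have h2 := H s t B hB1 (by linarith) hs hrec hsB htB step
    calc (b - η) ^ (N + 1 + 1) * s 0 = (b - η) * ((b - η) ^ (N + 1) * s 0) := by ring
      _ ≤ (b - η) * s (N + 1) := by gcongr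
      _ ≤ (b - δ) * s (N + 1) := by have := hs (N + 1); gcongr
      _ ≤ _ := hlast

/-- The counterpart of `growth` for sequences that shrink by nearly `b` at the last step. -/
lemma decay {α b : ℝ} (h0 : 0 < α) (h1 : α < 1) (hb : 1 < b) (N : ℕ) :
    ∀ η > 0, η < b → ∃ δ > 0, ∀ (s t : ℕ → ℝ) (B : ℝ), b ≤ B → B ≤ b + δ →
      (∀ k, 0 ≤ s k) → (∀ k, s (k + 1) = α * t k + (1 - α) * s k) →
      (∀ k, s k ≤ B * s (k + 1)) → (∀ k, t k ≤ B * t (k + 1)) →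
      (b - δ) * s (N + 1) ≤ s N → (b - η) ^ (N + 1) * s (N + 1) ≤ s 0 := by
  induction N with
  | zero =>
    intro η hη hηb
    refine ⟨η, hη, fun s t B _ _ _ _ _ _ h => by simpa using h⟩
  | succ N ih =>
    intro η hη hηb
    obtain ⟨δ', hδ', H⟩ := ih η hη hηb
    have h1' : 0 < 1 - α := by linarith
    have hb' : 0 < b - 1 := by linarith
    refine ⟨min (min (min δ' η) (b - 1)) (δ' * (1 - α) / 2), by positivity, ?_⟩
    set δ := min (min (min δ' η) (b - 1)) (δ' * (1 - α) / 2) with hδ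
    have d0 : 0 < δ := by positivity
    have d12 : δ ≤ min δ' η := (min_le_left _ _).trans (min_le_left _ _)
    have d1 : δ ≤ δ' := d12.trans (min_le_left _ _)
    have d2 : δ ≤ η := d12.trans (min_le_right _ _)
    have d4 : δ ≤ b - 1 := (min_le_left _ _).trans (min_le_right _ _)
    have d3 : 2 * δ ≤ δ' * (1 - α) := by
      have := min_le_right (min (min δ' η) (b - 1)) (δ' * (1 - α) / 2)
      rw [← hδ] at this
      linarith
    intro s t B hB1 hB2 hs hrec hsB htB hlast
    have step : (b - δ') * s (N + 1) ≤ s N := by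
      have a1 := hrec N
      have a2 := hrec (N + 1)
      have a5 := hs N
      have a6 := hs (N + 1)
      have a7 := hs (N + 1 + 1)
      have a3 : α * t N ≤ α * (B * t (N + 1)) := by
        have := htB N
        gcongr
      have e1 : α * (B * t (N + 1)) = B * s (N + 1 + 1) - B * (1 - α) * s (N + 1) := by
        rw [a2]; ring
      have e2 : B * s (N + 1 + 1) ≤ (b + δ) * s (N + 1 + 1) := by gcongr
      -- here `1 ≤ b - δ` turns `(b - δ) s (N+2) ≤ s (N+1)` into a bound on `s (N+2)` itself
      have e3 : s (N + 1 + 1) ≤ s (N + 1) := by nlinarith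
      have e4 : (b + δ) * s (N + 1 + 1) ≤ (1 + 2 * δ) * s (N + 1) := by nlinarith
      have e5 : b * (1 - α) * s (N + 1) ≤ B * (1 - α) * s (N + 1) := by gcongr
      have e6 : 2 * δ * s (N + 1) ≤ δ' * (1 - α) * s (N + 1) := by gcongr
      have e7 : (1 - α) * ((b - δ') * s (N + 1)) ≤ (1 - α) * s N := by nlinarith
      exact le_of_mul_le_mul_left e7 h1'
    have h2 := H s t B hB1 (by linarith) hs hrec hsB htB step
    have hpow : 0 ≤ (b - η) ^ (N + 1) := pow_nonneg (by linarith) _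
    have h3 : (b - η) * s (N + 1 + 1) ≤ s (N + 1) := by
      have : (b - η) * s (N + 1 + 1) ≤ (b - δ) * s (N + 1 + 1) := by
        have := hs (N + 1 + 1)
        gcongr
      linarith
    calc (b - η) ^ (N + 1 + 1) * s (N + 1 + 1)
        = (b - η) ^ (N + 1) * ((b - η) * s (N + 1 + 1)) := by ring
      _ ≤ (b - η) ^ (N + 1) * s (N + 1) := by gcongr
      _ ≤ _ := h2

/-- A `d_T`-bounded averaged sequence has `d_T(x n, x (n + 1)) → 0`. Otherwise the limiting step
ratio is some `b > 1`; a positive functional that nearly detects it at a late step sees, by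
`growth` or `decay`, nearly the factor `b` at each of the preceding steps, and the
product of these factors is unbounded. -/
lemma asymptotic_regularity (hC : IsClosedCone C) {α : ℝ} (h0 : 0 < α) (h1 : α < 1)
    {x y : ℕ → X} (hrec : ∀ n, x (n + 1) = α • y n + (1 - α) • x n) (hx : ∀ n, x n ∈ C)
    (hy : ∀ n β, 1 ≤ β → Comp C β (x n) (x (n + 1)) → Comp C β (y n) (y (n + 1)))
    {K : ℝ} (hK1 : 1 ≤ K) (hK : ∀ i j, Comp C K (x i) (x j)) {ε : ℝ} (hε : 0 < ε) :
    ∃ n₀, ∀ n ≥ n₀, Comp C (1 + ε) (x n) (x (n + 1)) := by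
  have hprop : ∀ β n, 1 ≤ β → Comp C β (x n) (x (n + 1)) →
      ∀ m ≥ n, Comp C β (x m) (x (m + 1)) := by
    intro β n hβ h m hm
    induction m, hm using Nat.le_induction with
    | base => exact h
    | succ m _ ih =>
      rw [hrec (m + 1)]
      nth_rewrite 1 [hrec m]
      exact (hy m β hβ ih).average hC h0.le h1.le ih
  set S : Set ℝ := {β | 1 ≤ β ∧ ∃ n, Comp C β (x n) (x (n + 1))} with hS
  have hSne : S.Nonempty := ⟨K, hK1, 0, hK _ _⟩
  have hSb : BddBelow S := ⟨1, fun _ h => h.1⟩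
  rcases lt_or_ge (sInf S) (1 + ε) with hlt | hge
  · obtain ⟨β, ⟨hβ, n, hn⟩, hβε⟩ := exists_lt_of_csInf_lt hSne hlt
    exact ⟨n, fun m hm => (hprop β n hβ hn m hm).mono hC hβε.le (hx _) (hx _)⟩
  exfalso
  set b := sInf S with hbdef
  have hb : 1 < b := by linarith
  set η := (b - 1) / 2 with hη
  obtain ⟨N, hN⟩ := pow_unbounded_of_one_lt K (show 1 < b - η by linarith)
  have hN' : K < (b - η) ^ (N + 1) :=
    hN.trans_le (pow_le_pow_right₀ (by linarith) (Nat.le_succ N))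
  obtain ⟨δ₁, hδ₁, H₁⟩ := growth h0 h1 hb N η (by linarith) (by linarith)
  obtain ⟨δ₂, hδ₂, H₂⟩ := decay h0 h1 hb N η (by linarith) (by linarith)
  set δ := min (min δ₁ δ₂) (b - 1) with hδ
  have d1 : δ ≤ δ₁ := (min_le_left _ _).trans (min_le_left _ _)
  have d2 : δ ≤ δ₂ := (min_le_left _ _).trans (min_le_right _ _)
  have d3 : δ ≤ b - 1 := min_le_right _ _
  have d0 : 0 < δ := lt_min (lt_min hδ₁ hδ₂) (by linarith)
  obtain ⟨B, ⟨hB1, n, hn⟩, hBδ⟩ := exists_lt_of_csInf_lt hSne (show sInf S < b + δ by linarith)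
  have hbB : b ≤ B := csInf_le hSb ⟨hB1, n, hn⟩
  have hnot : ¬ Comp C (b - δ) (x (n + N)) (x (n + N + 1)) := by
    intro h
    have : b ≤ b - δ := csInf_le hSb ⟨by linarith, _, h⟩
    linarith
  have hxB : ∀ k, Comp C B (x (n + k)) (x (n + k + 1)) := fun k => hprop B n hB1 hn _ (by omega)
  have hyB : ∀ k, Comp C B (y (n + k)) (y (n + k + 1)) := fun k => hy _ _ hB1 (hxB k)
  -- values of a nonnegative functional along the orbit
  have hle : ∀ φ : X →L[ℝ] ℝ, (∀ c ∈ C, 0 ≤ φ c) → ∀ (β : ℝ) (u v : X), β • u - v ∈ C →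
      φ v ≤ β * φ u := by
    intro φ hφ β u v h
    have := hφ _ h
    rw [map_sub, map_smul, smul_eq_mul] at this
    linarith
  have hφrec : ∀ φ : X →L[ℝ] ℝ, ∀ k,
      φ (x (n + (k + 1))) = α * φ (y (n + k)) + (1 - α) * φ (x (n + k)) := by
    intro φ k
    have := hrec (n + k)
    rw [← add_assoc, this]
    simp
  rw [Comp, not_and_or] at hnot
  rcases hnot with h | h
  · obtain ⟨φ, hφ, hv⟩ := exists_functional hC h
    rw [map_sub, map_smul, smul_eq_mul] at hv
    have hlast : (b - δ₁) * φ (x (n + N)) ≤ φ (x (n + (N + 1))) := by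
      have e : (b - δ₁) * φ (x (n + N)) ≤ (b - δ) * φ (x (n + N)) := by
        have := hφ _ (hx (n + N))
        gcongr
      rw [← add_assoc]
      linarith
    have hg := H₁ (fun k => φ (x (n + k))) (fun k => φ (y (n + k))) B hbB (by linarith)
      (fun k => hφ _ (hx _)) (hφrec φ) (fun k => hle φ hφ _ _ _ (hxB k).1)
      (fun k => hle φ hφ _ _ _ (hyB k).1) hlast
    have hup : φ (x (n + (N + 1))) ≤ K * φ (x (n + 0)) := hle φ hφ _ _ _ (hK _ _).1
    have hpos : 0 < φ (x (n + (N + 1))) := by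
      have : 0 ≤ (b - δ) * φ (x (n + N)) := mul_nonneg (by linarith) (hφ _ (hx _))
      rw [← add_assoc]
      linarith
    have hpos0 : 0 < φ (x (n + 0)) := by
      by_contra! hcon
      nlinarith
    beta_reduce at hg
    nlinarith
  · obtain ⟨φ, hφ, hv⟩ := exists_functional hC h
    rw [map_sub, map_smul, smul_eq_mul] at hv
    have hlast : (b - δ₂) * φ (x (n + (N + 1))) ≤ φ (x (n + N)) := by
      have e : (b - δ₂) * φ (x (n + (N + 1))) ≤ (b - δ) * φ (x (n + (N + 1))) := by
        have := hφ _ (hx (n + (N + 1)))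
        gcongr
      rw [← add_assoc] at e ⊢
      linarith
    have hg := H₂ (fun k => φ (x (n + k))) (fun k => φ (y (n + k))) B hbB (by linarith)
      (fun k => hφ _ (hx _)) (hφrec φ) (fun k => hle φ hφ _ _ _ (hxB k).2)
      (fun k => hle φ hφ _ _ _ (hyB k).2) hlast
    have hup : φ (x (n + 0)) ≤ K * φ (x (n + (N + 1))) := hle φ hφ _ _ _ (hK _ _).1
    have hup' : φ (x (n + N)) ≤ K * φ (x (n + (N + 1))) := hle φ hφ _ _ _ (hK _ _).1
    have hpos : 0 < φ (x (n + N)) := by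
      have : 0 ≤ (b - δ) * φ (x (n + N + 1)) := mul_nonneg (by linarith) (hφ _ (hx _))
      linarith
    have hpos0 : 0 < φ (x (n + (N + 1))) := by
      by_contra! hcon
      nlinarith
    beta_reduce at hg
    nlinarith

/-! ### Measures of noncompactness -/

section Measures

variable {Y : Type*}

/-- The infimum of all `d > 0` for which `A` has a finite cover by sets satisfying `P d`. Both
`kuratowski` and `tauMNC` are of this form. -/
noncomputable def mnc (P : ℝ → Set Y → Prop) (A : Set Y) : ℝ :=
  sInf {d : ℝ | 0 < d ∧ ∃ (n : ℕ) (S : Fin n → Set Y), A ⊆ ⋃ i, S i ∧ ∀ i, P d (S i)}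

lemma mnc_le {P : ℝ → Set Y → Prop} {A : Set Y} {ι : Type*} [Fintype ι] {d : ℝ} (hd : 0 < d)
    (S : ι → Set Y) (hA : A ⊆ ⋃ i, S i) (hS : ∀ i, P d (S i)) : mnc P A ≤ d := by
  unfold mnc
  refine csInf_le ⟨0, fun _ h => h.1.le⟩ ⟨hd, Fintype.card ι,
    fun i => S ((Fintype.equivFin ι).symm i), fun a ha => ?_, fun i => hS _⟩
  obtain ⟨i, hi⟩ := mem_iUnion.1 (hA ha)
  exact mem_iUnion.2 ⟨Fintype.equivFin ι i, by simpa using hi⟩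

lemma exists_cover_of_mnc_lt {P : ℝ → Set Y → Prop} {A : Set Y} {d₀ b : ℝ} (hd₀ : 0 < d₀)
    (hA : P d₀ A) (h : mnc P A < b) :
    ∃ d < b, 0 < d ∧ ∃ (n : ℕ) (S : Fin n → Set Y), A ⊆ ⋃ i, S i ∧ ∀ i, P d (S i) := by
  have hne : {d : ℝ | 0 < d ∧ ∃ (n : ℕ) (S : Fin n → Set Y),
      A ⊆ ⋃ i, S i ∧ ∀ i, P d (S i)}.Nonempty :=
    ⟨d₀, hd₀, 1, fun _ => A, fun a ha => mem_iUnion.2 ⟨0, ha⟩, fun _ => hA⟩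
  obtain ⟨d, hd, hdb⟩ := exists_lt_of_csInf_lt hne h
  exact ⟨d, hdb, hd⟩

/-- Suppose `A ⊆ {x₀} ∪ g(A)`. If `g` sends pieces of `A` whose size barely exceeds the
noncompactness of `A`, and whose `f`-image is definitely smaller, to sets of size below that
noncompactness, then `f` does not lower the noncompactness of `A`. -/
lemma mnc_not_lt {P : ℝ → Set Y → Prop} {A : Set Y} {f g : Y → Y} {x₀ : Y}
    (hA : A ⊆ insert x₀ (g '' A)) {d₀ : ℝ} (hd₀ : 0 < d₀) (hPA : P d₀ A) (hPfA : P d₀ (f '' A))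
    (hs : ∀ d > 0, P d {x₀})
    (h : ∀ a > 0, a < mnc P A → ∃ b > mnc P A, ∃ d > 0, d < mnc P A ∧ ∀ b' < b, ∀ S T,
      P a S → P b' T → P d (g '' (A ∩ T ∩ f ⁻¹' S))) :
    ¬ mnc P (f '' A) < mnc P A := by
  intro hlt
  obtain ⟨a, ham, ha, n, S, hS, hPS⟩ := exists_cover_of_mnc_lt hd₀ hPfA hlt
  obtain ⟨b, hb, d, hd, hdm, H⟩ := h a ha ham
  obtain ⟨b', hb', -, m, T, hT, hPT⟩ := exists_cover_of_mnc_lt hd₀ hPA hb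
  refine absurd (mnc_le (P := P) (A := A) (ι := Option (Fin n × Fin m)) hd
    (fun o => o.elim {x₀} fun p => g '' (A ∩ T p.2 ∩ f ⁻¹' S p.1)) ?_ ?_) (not_le.2 hdm)
  · intro z hz
    rcases hA hz with rfl | ⟨w, hw, rfl⟩
    · exact mem_iUnion.2 ⟨none, rfl⟩
    · obtain ⟨i, hi⟩ := mem_iUnion.1 (hS (mem_image_of_mem f hw))
      obtain ⟨j, hj⟩ := mem_iUnion.1 (hT hw)
      exact mem_iUnion.2 ⟨some (i, j), w, ⟨⟨hw, hj⟩, hi⟩, rfl⟩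
  · rintro (_ | ⟨i, j⟩)
    · exact hs d hd
    · exact H b' hb' _ _ (hPS i) (hPT j)

end Measures

lemma totallyBounded_of_mnc {P : ℝ → Set X → Prop} {A : Set X} {d₀ : ℝ} (hd₀ : 0 < d₀)
    (hPA : P d₀ A) (h0 : ¬ 0 < mnc P A)
    (h : ∀ ε > 0, ∃ d > 0, ∀ d' < d, ∀ S, P d' S → ∀ x ∈ A, ∀ y ∈ A, x ∈ S → y ∈ S → dist x y < ε) :
    TotallyBounded A := by
  rw [Metric.totallyBounded_iff]
  intro ε hε
  obtain ⟨d, hd, H⟩ := h ε hε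
  obtain ⟨d', hd', -, n, S, hS, hPS⟩ :=
    exists_cover_of_mnc_lt hd₀ hPA ((not_lt.1 h0).trans_lt hd)
  classical
  refine ⟨range fun i => if hi : (A ∩ S i).Nonempty then hi.some else 0, finite_range _, ?_⟩
  intro z hz
  obtain ⟨i, hi⟩ := mem_iUnion.1 (hS hz)
  have hne : (A ∩ S i).Nonempty := ⟨z, hz, hi⟩
  refine mem_iUnion₂.2 ⟨_, mem_range_self i, ?_⟩
  rw [dif_pos hne, Metric.mem_ball]
  exact H d' hd' _ (hPS i) _ hz _ hne.some_mem.1 hi hne.some_mem.2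

lemma kuratowski_eq_mnc (A : Set X) :
    kuratowski A = mnc (fun d S => IsBounded S ∧ Metric.diam S ≤ d) A := rfl

lemma tauMNC_eq_mnc (A : Set X) : tauMNC C A = mnc (fun d S => S ⊆ interior C ∧
    ∀ x ∈ S, ∀ y ∈ S, thompsonDist C x y ≤ d) A := rfl

/-! ### Total boundedness of the orbit -/

/-- Covers of `f(A)` and `A` by sets of diameter `a` and `b` give a cover of the averaged image
of diameter `α a + (1 - α) b`. -/
lemma totallyBounded_of_gammaCondensing {D A : Set X} {f : X → X} (hf : GammaCondensing f D)
    {α : ℝ} (h0 : 0 < α) (h1 : α < 1) {x₀ : X} (hAD : A ⊆ D)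
    (hA : A ⊆ insert x₀ ((fun v => α • f v + (1 - α) • v) '' A))
    (hgA : (fun v => α • f v + (1 - α) • v) '' A ⊆ A)
    (hb : IsBounded A) (hfb : IsBounded (f '' A)) : TotallyBounded A := by
  have hd₀ : 0 < max (Metric.diam A) (Metric.diam (f '' A)) + 1 := by
    have : 0 ≤ Metric.diam A := Metric.diam_nonneg
    positivity
  have hl := le_max_left (Metric.diam A) (Metric.diam (f '' A))
  have hr := le_max_right (Metric.diam A) (Metric.diam (f '' A))
  refine totallyBounded_of_mnc (P := fun d S => IsBounded S ∧ Metric.diam S ≤ d) hd₀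
    ⟨hb, by linarith⟩ ?_ ?_
  · rw [← kuratowski_eq_mnc]
    intro hpos
    refine mnc_not_lt (P := fun d S => IsBounded S ∧ Metric.diam S ≤ d) hA hd₀
      ⟨hb, by linarith⟩ ⟨hfb, by linarith⟩ ?_ ?_ (hf.2 A hAD hb hpos)
    · intro d hd
      exact ⟨isBounded_singleton, by simpa using hd.le⟩
    · intro a ha ham
      set m := mnc (fun d S => IsBounded S ∧ Metric.diam S ≤ d) A
      have hma : 0 < α * (m - a) := mul_pos h0 (by linarith)
      have h1' : 0 < 1 - α := by linarith
      refine ⟨m + α * (m - a) / 2, by linarith, α * a + (1 - α) * (m + α * (m - a) / 2), ?_, ?_, ?_⟩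
      · have : 0 < m := by linarith
        positivity
      · nlinarith
      · intro b' hb' S T hS hT
        refine ⟨hb.subset ((image_mono fun z hz => hz.1.1).trans hgA),
          Metric.diam_le_of_forall_dist_le ?_ ?_⟩
        · have : 0 < m := by linarith
          positivity
        · rintro _ ⟨v, ⟨⟨-, hvT⟩, hvS⟩, rfl⟩ _ ⟨w, ⟨⟨-, hwT⟩, hwS⟩, rfl⟩
          have e1 := (Metric.dist_le_diam_of_mem hS.1 hvS hwS).trans hS.2
          have e2 := (Metric.dist_le_diam_of_mem hT.1 hvT hwT).trans hT.2
          calc _ ≤ dist (α • f v) (α • f w) + dist ((1 - α) • v) ((1 - α) • w) :=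
                dist_add_add_le _ _ _ _
            _ = α * dist (f v) (f w) + (1 - α) * dist v w := by
                rw [dist_smul₀, dist_smul₀, Real.norm_of_nonneg h0.le, Real.norm_of_nonneg h1'.le]
            _ ≤ _ := by gcongr; linarith
  · intro ε hε
    refine ⟨ε, hε, fun d' hd' S hS x _ y _ hx hy => ?_⟩
    exact ((Metric.dist_le_diam_of_mem hS.1 hx hy).trans hS.2).trans_lt hd'

/-- Thompson's metric only satisfies
`d_T(α u + (1 - α) x, α v + (1 - α) y) ≤ max (d_T(u, v)) (d_T(x, y))`, but when `u ≥ c x` and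
`d_T(u, v)` is the smaller one, the inequality is strict with a gap depending only on `c`. -/
lemma totallyBounded_of_tauCondensing (hC : IsClosedCone C) (hnorm : IsNormalCone C)
    {A : Set X} {f : X → X}
    (hf : TauCondensing C f (interior C)) (hfm : MapsTo f (interior C) (interior C))
    {α : ℝ} (h0 : 0 < α) (h1 : α < 1) {x₀ : X} (hx₀ : x₀ ∈ interior C)
    (hAD : A ⊆ interior C) (hA : A ⊆ insert x₀ ((fun v => α • f v + (1 - α) • v) '' A))
    (hgA : (fun v => α • f v + (1 - α) • v) '' A ⊆ A)
    {K : ℝ} (hK1 : 1 < K) (hK : ∀ u ∈ A, ∀ v ∈ A, Comp C K u v)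
    (hfK : ∀ u ∈ A, ∀ v ∈ A, Comp C K (f u) (f v))
    {c : ℝ} (hc : 0 < c) (hfc : ∀ v ∈ A, f v - c • v ∈ C)
    {L : ℝ} (hL : ∀ v ∈ A, ‖v‖ ≤ L) : TotallyBounded A := by
  set P : ℝ → Set X → Prop := fun d S => S ⊆ interior C ∧
    ∀ x ∈ S, ∀ y ∈ S, thompsonDist C x y ≤ d with hP
  have hd₀ : 0 < Real.log K := Real.log_pos hK1
  have hTA : ∀ x ∈ A, ∀ y ∈ A, thompsonDist C x y ≤ Real.log K := fun x hx y hy =>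
    (thompsonDist_le_log_iff hC (hAD hx) (hAD hy) hK1.le).2 (hK x hx y hy)
  have hPA : P (Real.log K) A := ⟨hAD, hTA⟩
  have hPfA : P (Real.log K) (f '' A) := by
    refine ⟨image_subset_iff.2 fun v hv => hfm (hAD hv), ?_⟩
    rintro _ ⟨u, hu, rfl⟩ _ ⟨v, hv, rfl⟩
    exact (thompsonDist_le_log_iff hC (hfm (hAD hu)) (hfm (hAD hv)) hK1.le).2 (hfK u hu v hv)
  -- comparability from small `d_T`-distance
  have hcomp : ∀ d ≥ 0, ∀ x ∈ interior C, ∀ y ∈ interior C, thompsonDist C x y ≤ d →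
      Comp C (Real.exp d) x y := by
    intro d hd x hx y hy h
    rw [← thompsonDist_le_log_iff hC hx hy (Real.one_le_exp hd), Real.log_exp]
    exact h
  refine totallyBounded_of_mnc (P := P) hd₀ hPA ?_ ?_
  · intro hpos
    refine mnc_not_lt (P := P) hA hd₀ hPA hPfA ?_ ?_ (hf.2 A hAD ⟨_, hTA⟩ hpos)
    · intro d hd
      refine ⟨singleton_subset_iff.2 hx₀, ?_⟩
      rintro _ rfl _ rfl
      have : thompsonDist C _ _ ≤ Real.log 1 :=
        (thompsonDist_le_log_iff hC hx₀ hx₀ le_rfl).2 ⟨by simpa using cone_zero hC,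
          by simpa using cone_zero hC⟩
      rw [Real.log_one] at this
      linarith
    · intro a ha ham
      set m := mnc P A
      have h1' : 0 < 1 - α := by linarith
      have hea : 1 < Real.exp a := Real.one_lt_exp_iff.2 ha
      have heam : Real.exp a < Real.exp m := Real.exp_lt_exp.2 ham
      set θ := α * c / (1 + α * c) with hθ
      have hαc : 0 < α * c := mul_pos h0 hc
      have hθ0 : 0 < θ := by positivity
      have hθ1 : θ * (1 + α * c) = α * c := div_mul_cancel₀ _ (by positivity)
      have hθ2 : θ < 1 := by rw [hθ, div_lt_one (by positivity)]; linarith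
      -- `M` is the improved ratio; `E` balances the slack in the `f`-part against the `A`-part
      set M := Real.exp m - θ * (Real.exp m - Real.exp a) with hM
      set E := M + (M - Real.exp a) * α * c / (1 - α) with hE
      have hMm : M < Real.exp m := by
        have : 0 < θ * (Real.exp m - Real.exp a) := mul_pos hθ0 (by linarith)
        linarith
      have hMa' : M - Real.exp a = (1 - θ) * (Real.exp m - Real.exp a) := by rw [hM]; ring
      have hMa : Real.exp a < M := by
        have : 0 < (1 - θ) * (Real.exp m - Real.exp a) := mul_pos (by linarith) (by linarith)
        linarith
      have hEM : (1 - α) * (E - M) = α * (M - Real.exp a) * c := by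
        rw [hE]; field_simp; ring
      have hmE : Real.exp m < E := by
        have h2 : (1 - α) * (Real.exp m - M) < (1 - α) * (E - M) := by
          rw [hEM, hMa', hM]
          have : 0 < θ * α * (Real.exp m - Real.exp a) :=
            mul_pos (mul_pos hθ0 h0) (by linarith)
          have e : α * ((1 - θ) * (Real.exp m - Real.exp a)) * c
              = (α * c - θ * (α * c)) * (Real.exp m - Real.exp a) := by ring
          have e2 : α * c - θ * (α * c) = θ := by linarith
          rw [e, e2]
          nlinarith
        have := lt_of_mul_lt_mul_left h2 h1'.le
        linarith
      have hM1 : 1 < M := hea.trans hMa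
      have hE0 : 0 < E := by linarith
      refine ⟨Real.log E, (Real.lt_log_iff_exp_lt hE0).2 hmE, Real.log M, Real.log_pos hM1,
        (Real.log_lt_iff_lt_exp (by linarith)).2 hMm, ?_⟩
      intro b' hb' S T hS hT
      have hb0 : 0 ≤ Real.log E := Real.log_nonneg (by linarith)
      have key : ∀ v ∈ A ∩ T ∩ f ⁻¹' S, ∀ w ∈ A ∩ T ∩ f ⁻¹' S,
          M • (α • f v + (1 - α) • v) - (α • f w + (1 - α) • w) ∈ C := by
        rintro v ⟨⟨hvA, hvT⟩, hvS⟩ w ⟨⟨hwA, hwT⟩, hwS⟩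
        have c1 := (hcomp a ha.le _ (hS.1 hvS) _ (hS.1 hwS) (hS.2 _ hvS _ hwS)).1
        have c2 := (hcomp (Real.log E) hb0 _ (hT.1 hvT) _ (hT.1 hwT)
          ((hT.2 _ hvT _ hwT).trans hb'.le)).1
        rw [Real.exp_log hE0] at c2
        have c3 := cone_add hC (cone_smul hC (mul_nonneg h0.le (sub_nonneg.2 hMa.le)) (hfc v hvA))
          (cone_add hC (cone_smul hC h0.le c1) (cone_smul hC h1'.le c2))
        have e : (α * (M - Real.exp a)) • (f v - c • v)
            + (α • (Real.exp a • f v - f w) + (1 - α) • (E • v - w))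
            = M • (α • f v + (1 - α) • v) - (α • f w + (1 - α) • w)
              + ((1 - α) * (E - M) - α * (M - Real.exp a) * c) • v := by module
        rwa [e, hEM, sub_self, zero_smul, add_zero] at c3
      have hsub : (fun v => α • f v + (1 - α) • v) '' (A ∩ T ∩ f ⁻¹' S) ⊆ interior C :=
        ((image_mono fun z hz => hz.1.1).trans hgA).trans hAD
      refine ⟨hsub, ?_⟩
      rintro _ ⟨v, hv, rfl⟩ _ ⟨w, hw, rfl⟩
      rw [thompsonDist_le_log_iff hC (hsub ⟨v, hv, rfl⟩) (hsub ⟨w, hw, rfl⟩) hM1.le]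
      exact ⟨key v hv w hw, key w hw v hv⟩
  · intro ε hε
    obtain ⟨κ, hκ⟩ := hnorm
    have hQ : 0 < |κ| * (2 * |L|) + |L| + 1 := by positivity
    set Q := |κ| * (2 * |L|) + |L| + 1
    refine ⟨Real.log (1 + ε / (2 * Q)), Real.log_pos (by linarith [show 0 < ε / (2 * Q) by positivity]),
      fun d' hd' S hS x hxA y hyA hxS hyS => ?_⟩
    have hpos : 0 < ε / (2 * Q) := by positivity
    have hcp := (thompsonDist_le_log_iff hC (hAD hxA) (hAD hyA) (by linarith)).1
      ((hS.2 _ hxS _ hyS).trans hd'.le)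
    have h2 := hcp.norm_le hκ (by linarith) ((hL x hxA).trans (le_abs_self L))
      ((hL y hyA).trans (le_abs_self L))
    rw [dist_eq_norm]
    have h3 : (1 + ε / (2 * Q) - 1) * (|κ| * (2 * |L|) + |L|) ≤ ε / (2 * Q) * Q := by
      rw [add_sub_cancel_left]
      gcongr
      linarith
    have h4 : ε / (2 * Q) * Q = ε / 2 := by field_simp
    linarith

/-- A `d_T`-nonexpansive map preserves comparability constants. -/
lemma TNonexpansiveOn.comp (hC : IsClosedCone C) {f : X → X}
    (hfn : TNonexpansiveOn C f (interior C)) (hf : MapsTo f (interior C) (interior C)) {β : ℝ}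
    (hβ : 1 ≤ β) {x y : X} (hx : x ∈ interior C) (hy : y ∈ interior C) (h : Comp C β x y) :
    Comp C β (f x) (f y) :=
  (thompsonDist_le_log_iff hC (hf hx) (hf hy) hβ).1
    ((hfn x hx y hy).trans ((thompsonDist_le_log_iff hC hx hy hβ).2 h))

end Krasnoselskii

/-! ### Convergence -/

/-- Krasnoselskii iteration. If a `d_T`-nonexpansive, `γ`- or `τ`-condensing map
`f : int C → int C` has a fixed point, then for any `0 < α < 1` and `x₀ ∈ int C` the sequence
`x_{n+1} = α • f x_n + (1 - α) • x_n` converges to a fixed point of `f`. -/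
theorem stmt5 {X : Type*} [NormedAddCommGroup X] [NormedSpace ℝ X] [CompleteSpace X]
    {C : Set X} (hC : IsClosedCone C) (hnorm : IsNormalCone C)
    (hne : (interior C).Nonempty) {f : X → X}
    (hf : Set.MapsTo f (interior C) (interior C))
    (hfn : TNonexpansiveOn C f (interior C))
    (hcond : GammaCondensing f (interior C) ∨ TauCondensing C f (interior C))
    (hfix : ∃ p ∈ interior C, f p = p)
    {α : ℝ} (hα0 : 0 < α) (hα1 : α < 1)
    {x₀ : X} (hx₀ : x₀ ∈ interior C)
    (x : ℕ → X) (hx0 : x 0 = x₀)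
    (hrec : ∀ n, x (n + 1) = α • f (x n) + (1 - α) • x n) :
    ∃ p ∈ interior C, f p = p ∧ Tendsto x atTop (𝓝 p) := by
  have hn := hnorm
  obtain ⟨κ, hκ⟩ := hnorm
  obtain ⟨p, hp, hpf⟩ := hfix
  subst hx0
  set g : X → X := fun v => α • f v + (1 - α) • v with hg
  have h1' : 0 < 1 - α := by linarith
  have hxU : ∀ n, x n ∈ interior C := by
    intro n
    induction n with
    | zero => exact hx₀
    | succ n ih =>
      refine mem_interior_of_ge hC ih h1' ?_
      rw [hrec, add_sub_cancel_right]
      exact cone_smul hC hα0.le (interior_subset (hf ih))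
  have hxC : ∀ n, x n ∈ C := fun n => interior_subset (hxU n)
  obtain ⟨K, hK, hKp⟩ : ∃ K : ℝ, 1 < K ∧ Comp C K (x 0) p := by
    obtain ⟨K, hK, h⟩ := exists_comp hC hx₀ hp
    exact ⟨K + 1, by linarith,
      h.mono hC (by linarith) (interior_subset hx₀) (interior_subset hp)⟩
  have hK0 : 0 < K := by linarith
  have hKK : 1 < K * K := by nlinarith
  -- a comparability constant with a fixed point persists along the iteration
  have hstep : ∀ q ∈ interior C, f q = q → ∀ β, 1 ≤ β → ∀ n, Comp C β (x n) q →
      ∀ m ≥ n, Comp C β (x m) q := by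
    intro q hq hfq β hβ n h m hm
    induction m, hm using Nat.le_induction with
    | base => exact h
    | succ m _ ih =>
      have h2 := hfn.comp hC hf hβ (hxU m) hq ih
      rw [hfq] at h2
      have h3 := h2.average hC hα0.le hα1.le ih
      have e : α • q + (1 - α) • q = q := by module
      rwa [e, ← hrec] at h3
  have hxp : ∀ n, Comp C K (x n) p := fun n =>
    hstep p hp hpf K hK.le 0 hKp n (Nat.zero_le n)
  have hfxp : ∀ n, Comp C K (f (x n)) p := by
    intro n
    have := hfn.comp hC hf hK.le (hxU n) hp (hxp n)
    rwa [hpf] at this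
  have hxx : ∀ i j, Comp C (K * K) (x i) (x j) := fun i j =>
    (hxp i).trans hC hK0.le hK0.le (hxp j).symm
  have hnormb : ∀ z ∈ C, Comp C K z p → ‖z‖ ≤ κ * ‖K • p‖ := fun z hz h => hκ _ _ hz h.2
  have hge : ∀ n, x n - K⁻¹ • p ∈ C := by
    intro n
    have := cone_smul hC (inv_pos.2 hK0).le (hxp n).1
    rwa [smul_sub, inv_smul_smul₀ hK0.ne'] at this
  -- the orbit is totally bounded
  set A := Set.range x with hAdef
  have hAD : A ⊆ interior C := Set.range_subset_iff.2 hxU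
  have hA : A ⊆ insert (x 0) (g '' A) := by
    rintro _ ⟨n, rfl⟩
    cases n with
    | zero => exact Set.mem_insert _ _
    | succ n => exact Set.mem_insert_of_mem _ ⟨x n, ⟨n, rfl⟩, (hrec n).symm⟩
  have hgA : g '' A ⊆ A := by
    rintro _ ⟨_, ⟨n, rfl⟩, rfl⟩
    exact ⟨n + 1, hrec n⟩
  have hAb : ∀ v ∈ A, ‖v‖ ≤ κ * ‖K • p‖ := by
    rintro _ ⟨n, rfl⟩
    exact hnormb _ (hxC n) (hxp n)
  have htb : TotallyBounded A := by
    rcases hcond with h | h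
    · refine totallyBounded_of_gammaCondensing h hα0 hα1 hAD hA hgA
        (isBounded_iff_forall_norm_le.2 ⟨_, hAb⟩)
        (isBounded_iff_forall_norm_le.2 ⟨κ * ‖K • p‖, ?_⟩)
      rintro _ ⟨_, ⟨n, rfl⟩, rfl⟩
      exact hnormb _ (interior_subset (hf (hxU n))) (hfxp n)
    · refine totallyBounded_of_tauCondensing hC hn h hf hα0 hα1 hx₀ hAD hA hgA hKK
        ?_ ?_ (inv_pos.2 (mul_pos hK0 hK0)) ?_ hAb
      · rintro _ ⟨i, rfl⟩ _ ⟨j, rfl⟩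
        exact hxx i j
      · rintro _ ⟨i, rfl⟩ _ ⟨j, rfl⟩
        exact (hfxp i).trans hC hK0.le hK0.le (hfxp j).symm
      · rintro _ ⟨n, rfl⟩
        have := cone_smul hC (inv_pos.2 (mul_pos hK0 hK0)).le
          ((hfxp n).trans hC hK0.le hK0.le (hxp n).symm).1
        rwa [smul_sub, inv_smul_smul₀ (mul_pos hK0 hK0).ne'] at this
  -- a norm cluster point `q` of the orbit
  have hcpt : IsCompact (closure A) :=
    htb.closure.isCompact_of_isClosed isClosed_closure
  obtain ⟨q, -, ψ, hψ, hlim⟩ := hcpt.tendsto_subseq (x := x)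
    fun n => subset_closure (Set.mem_range_self n)
  have hqge : q - K⁻¹ • p ∈ C :=
    hC.1.mem_of_tendsto (hlim.sub_const _) (Filter.Eventually.of_forall fun n => hge _)
  have hq : q ∈ interior C := mem_interior_of_ge hC hp (inv_pos.2 hK0) hqge
  have hfc : ContinuousOn f (interior C) := hcond.elim (fun h => h.1) fun h => h.1
  have hflim : Tendsto (fun n => f (x (ψ n))) atTop (𝓝 (f q)) :=
    (hfc.continuousAt (isOpen_interior.mem_nhds hq)).tendsto.comp hlim
  have hdiff : Tendsto (fun n => x n - x (n + 1)) atTop (𝓝 0) := by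
    rw [Metric.tendsto_atTop]
    intro ε hε
    set L := κ * ‖K • p‖ with hL
    have hL0 : 0 ≤ L := (norm_nonneg _).trans (hAb (x 0) ⟨0, rfl⟩)
    have hQ : 0 < |κ| * (2 * L) + L + 1 := by positivity
    set Q := |κ| * (2 * L) + L + 1 with hQdef
    have hpos : 0 < ε / (2 * Q) := by positivity
    obtain ⟨n₀, h⟩ := asymptotic_regularity hC hα0 hα1 (y := fun n => f (x n)) hrec hxC
      (fun n β hβ h => hfn.comp hC hf hβ (hxU n) (hxU (n + 1)) h) hKK.le hxx hpos
    refine ⟨n₀, fun n hn => ?_⟩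
    have h2 := (h n hn).norm_le hκ (by linarith) (hAb _ ⟨n, rfl⟩) (hAb _ ⟨n + 1, rfl⟩)
    rw [dist_zero_right]
    have h3 : (1 + ε / (2 * Q) - 1) * (|κ| * (2 * L) + L) ≤ ε / (2 * Q) * Q := by
      rw [add_sub_cancel_left]
      gcongr
      linarith
    have h4 : ε / (2 * Q) * Q = ε / 2 := by field_simp
    linarith
  have hfq : f q = q := by
    have l1 : Tendsto (fun n => α • (x (ψ n) - f (x (ψ n)))) atTop (𝓝 (α • (q - f q))) :=
      (hlim.sub hflim).const_smul α
    have l2 : Tendsto (fun n => α • (x (ψ n) - f (x (ψ n)))) atTop (𝓝 0) := by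
      refine (hdiff.comp hψ.tendsto_atTop).congr fun n => ?_
      simp only [Function.comp_apply, hrec (ψ n)]
      module
    have h := tendsto_nhds_unique l1 l2
    rw [smul_eq_zero] at h
    exact (sub_eq_zero.1 (h.resolve_left hα0.ne')).symm
  refine ⟨q, hq, hfq, ?_⟩
  -- closeness to `q` at one late index persists, since `q` is a fixed point
  rw [Metric.tendsto_atTop]
  intro ε hε
  set L := max (κ * ‖K • p‖) ‖q‖ with hL
  have hL0 : 0 ≤ L := le_max_of_le_right (norm_nonneg q)
  have hQ : 0 < |κ| * (2 * L) + L + 1 := by positivity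
  set Q := |κ| * (2 * L) + L + 1 with hQdef
  have hpos : 0 < ε / (2 * Q) := by positivity
  obtain ⟨δ, hδ, hclose⟩ := exists_delta_comp hC hp hpos (inv_pos.2 hK0)
  obtain ⟨N, hN⟩ := Metric.tendsto_atTop.1 hlim δ hδ
  have hNN := hN N le_rfl
  rw [Function.comp_apply, dist_eq_norm] at hNN
  refine ⟨ψ N, fun n hn => ?_⟩
  have h2 := (hstep q hq hfq _ (by linarith) _ (hclose _ _ (hge _) hqge hNN) n hn).norm_le hκ
    (by linarith) ((hAb _ ⟨n, rfl⟩).trans (le_max_left _ _)) (le_max_right _ _)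
  rw [dist_eq_norm]
  have h3 : (1 + ε / (2 * Q) - 1) * (|κ| * (2 * L) + L) ≤ ε / (2 * Q) * Q := by
    rw [add_sub_cancel_left]
    gcongr
    linarith
  have h4 : ε / (2 * Q) * Q = ε / 2 := by field_simp
  linarith
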